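/- Let x ∈ ℝ² with irrational slope and let y be an irrational number with irrationality measure ω(y) = 1. Then for almost every point Y on the line ℝ·(y,1)ᵀ (with respect to the 1-dimensional Lebesgue measure), the exponent μ(x, Y) ≤ 1/2. -/

import Mathlib

open Matrix MeasureTheory

/-- Denominator `q k` of the `k`-th convergent of the continued fraction of `ξ`. -/
noncomputable def qden (ξ : ℝ) (k : ℕ) : ℝ := (GenContFract.of ξ).dens k

/-- Numerator `p k` of the `k`-th convergent of the continued fraction of `ξ`. -/
noncomputable def pnum (ξ : ℝ) (k : ℕ) : ℝ := (GenContFract.of ξ).nums k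

/-- Action of an integer matrix on `ℝ²` by left multiplication. -/
noncomputable def act (g : Matrix (Fin 2) (Fin 2) ℤ) (x : Fin 2 → ℝ) : Fin 2 → ℝ :=
  (g.map (Int.cast : ℤ → ℝ)).mulVec x

/-- Sup norm of an integer `2 × 2` matrix. -/
noncomputable def mnorm (g : Matrix (Fin 2) (Fin 2) ℤ) : ℝ :=
  max (max |(g 0 0 : ℝ)| |(g 0 1 : ℝ)|) (max |(g 1 0 : ℝ)| |(g 1 1 : ℝ)|)

/-- Sup norm on `ℝ²`. -/
noncomputable def vnorm (v : Fin 2 → ℝ) : ℝ := max |v 0| |v 1|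

/-- The set of exponents `w` such that `|v α + u| ≤ |v| ^ (-w)` has infinitely many
integer solutions `(v, u)`; its supremum is the irrationality measure `ω(α)`. -/
def omegaSet (α : ℝ) : Set ℝ :=
  {w : ℝ | {p : ℤ × ℤ | |(p.1 : ℝ) * α + (p.2 : ℝ)| ≤ |(p.1 : ℝ)| ^ (-w)}.Infinite}

/-- The set of exponents `μ` such that `|γ x - y| ≤ |γ| ^ (-μ)` for infinitely many
`γ ∈ SL(2, ℤ)`; its supremum is `μ(x, y)`. -/
def muSet (x y : Fin 2 → ℝ) : Set ℝ :=
  {μ : ℝ | {γ : Matrix (Fin 2) (Fin 2) ℤ |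
    γ.det = 1 ∧ vnorm (act γ x - y) ≤ mnorm γ ^ (-μ)}.Infinite}

/-- The set of exponents `μ` such that for all sufficiently large `T` there is
`γ ∈ SL(2, ℤ)` with `|γ| ≤ T` and `|γ x - y| ≤ T ^ (-μ)`; its supremum is `μ̂(x, y)`. -/
def muHatSet (x y : Fin 2 → ℝ) : Set ℝ :=
  {μ : ℝ | ∃ T₀ : ℝ, ∀ T : ℝ, T₀ ≤ T → ∃ γ : Matrix (Fin 2) (Fin 2) ℤ,
    γ.det = 1 ∧ mnorm γ ≤ T ∧ vnorm (act γ x - y) ≤ T ^ (-μ)}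

open Filter Topology
open scoped Finset

/-!
Suppose `ω(y) ≤ w`. A fraction `p / q` with `q ≤ Q ^ w` and `|q y - p| ≤ Q ^ (-w)`, which exists
by Dirichlet, must have `q ≥ Q` once `Q` is large; completing `(q, -p)` to a unimodular basis gives
`N ∈ SL(2, ℤ)` with first column `≤ Q ^ w` and `|N (y, 1)| ≤ 2 / Q`.

If `γ x` lies within `κ = Q ^ (-(w + 1))` of `t (y, 1)` and `|γ| ≪ Q ^ v`, then the columns of `γ`
are nearly parallel to `(y, 1)` as well, so `N` shrinks both: `|N γ| ≪ Q ^ (v - 1)` and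
`|N γ x| ≪ 1 / Q`. Only `≪ S δ` matrices `g ∈ SL(2, ℤ)` satisfy `|g| ≤ S` and `|g x| ≤ δ`,
uniformly in `S` and `δ`, so `≪ Q ^ (v - 2)` matrices `γ` occur, and they account for a set of `t`
of measure `≪ Q ^ (v - 2) κ = Q ^ (v - w - 3)`. Along `Q = 2 ^ j` this is summable as soon as
`v < w + 3`, and Borel–Cantelli excludes every exponent `(w + 1) / v > (w + 1) / (w + 3)`; for
`w = 1` the bound is `1 / 2`.
-/

section Counting

theorem card_le_mul_card_image_of_fiber_le {α β : Type*} [DecidableEq β] {f : α → β} {s : Finset α}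
    {c : ℝ} (h : ∀ b ∈ s.image f, (#{a ∈ s | f a = b} : ℝ) ≤ c) :
    (#s : ℝ) ≤ c * #(s.image f) := by
  rw [Finset.card_eq_sum_card_image f s, Nat.cast_sum, mul_comm, ← nsmul_eq_mul]
  exact Finset.sum_le_card_nsmul _ _ _ h

theorem card_le_of_abs_intCast_le {s : Finset ℤ} {B : ℝ} (hB : 0 ≤ B)
    (hs : ∀ n ∈ s, |(n : ℝ)| ≤ B) : (#s : ℝ) ≤ 2 * B + 1 := by
  have hsub : s ⊆ Finset.Icc (-⌊B⌋) ⌊B⌋ := fun n hn => by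
    rw [Finset.mem_Icc, ← abs_le, Int.le_floor, Int.cast_abs]
    exact hs n hn
  have hcard : ((#(Finset.Icc (-⌊B⌋) ⌊B⌋) : ℤ) : ℝ) = 2 * ⌊B⌋ + 1 := by
    have := Int.floor_nonneg.2 hB
    rw [Int.card_Icc, Int.toNat_of_nonneg (by lia)]
    push_cast
    ring
  calc (#s : ℝ) ≤ #(Finset.Icc (-⌊B⌋) ⌊B⌋) := mod_cast Finset.card_le_card hsub
    _ = 2 * ⌊B⌋ + 1 := mod_cast hcard
    _ ≤ 2 * B + 1 := by linarith [Int.floor_le B]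

theorem card_le_of_sub_mem_zmultiples {E Λ : Type*} [SeminormedAddCommGroup E]
    [NormedSpace ℝ E] [AddCommGroup Λ] {φ : Λ →+ E} {e : Λ} {r : ℝ}
    (he : 0 < ‖φ e‖) (her : ‖φ e‖ ≤ r) {s : Finset Λ} (hs : ∀ a ∈ s, ‖φ a‖ ≤ r)
    (hsub : ∀ a ∈ s, ∀ b ∈ s, ∃ n : ℤ, a - b = n • e) : (#s : ℝ) ≤ 5 * r / ‖φ e‖ := by
  classical
  rcases s.eq_empty_or_nonempty with rfl | ⟨b, hb⟩
  · simpa using div_nonneg (by linarith) he.le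
  choose! n hn using fun a ha => hsub a ha b hb
  have hinj : Set.InjOn n s := fun a ha a' ha' h => by
    rw [← sub_left_inj, hn a ha, hn a' ha', h]
  have hbound : ∀ k ∈ s.image n, |(k : ℝ)| ≤ 2 * r / ‖φ e‖ := by
    rintro k hk
    obtain ⟨a, ha, rfl⟩ := Finset.mem_image.1 hk
    rw [le_div_iff₀ he, ← Real.norm_eq_abs, ← norm_zsmul ℝ, ← map_zsmul, ← hn a ha, map_sub]
    linarith [norm_sub_le (φ a) (φ b), hs a ha, hs b hb]
  calc (#s : ℝ) = #(s.image n) := by rw [Finset.card_image_of_injOn hinj]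
    _ ≤ 2 * (2 * r / ‖φ e‖) + 1 :=
      card_le_of_abs_intCast_le (div_nonneg (by linarith) he.le) hbound
    _ ≤ 2 * (2 * r / ‖φ e‖) + r / ‖φ e‖ := by gcongr; exact (one_le_div he).2 her
    _ = 5 * r / ‖φ e‖ := by ring

/-- The determinant `u ∧ v` of a pair of vectors of `ℤ²`, i.e. of the matrix with rows `u` and
`v`; it measures how many cosets of `ℤ u` separate `v` from `0`. -/
def wedge (u v : Fin 2 → ℤ) : ℤ := u 0 * v 1 - u 1 * v 0

theorem det_eq_wedge (g : Matrix (Fin 2) (Fin 2) ℤ) : g.det = wedge (g 0) (g 1) :=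
  Matrix.det_fin_two g

theorem wedge_sub_right (u v w : Fin 2 → ℤ) : wedge u (v - w) = wedge u v - wedge u w := by
  simp only [wedge, Pi.sub_apply]
  ring

theorem exists_eq_zsmul_of_wedge_eq_zero {e f u : Fin 2 → ℤ} (hef : wedge e f = 1)
    (heu : wedge e u = 0) : ∃ n : ℤ, u = n • e := by
  refine ⟨wedge u f, funext fun i => ?_⟩
  simp only [wedge] at hef heu
  fin_cases i <;> simp only [wedge, Pi.smul_apply, smul_eq_mul, Fin.zero_eta, Fin.mk_one]
  · linear_combination (-u 0) * hef + f 0 * heu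
  · linear_combination (-u 1) * hef + f 1 * heu

-- `|u ∧ v| ≤ B ‖φ u‖ ‖φ v‖` says that the unit ball of the gauge `‖φ ·‖` has area `≪ B`. The usual
-- error term of a lattice point count is absorbed because the ball contains a unimodular pair.
variable {E : Type*} [SeminormedAddCommGroup E] {φ : (Fin 2 → ℤ) →+ E} {B : ℝ}

theorem nonneg_of_abs_wedge_le (hφ : ∀ u v, |(wedge u v : ℝ)| ≤ B * (‖φ u‖ * ‖φ v‖)) : 0 ≤ B := by
  have hone := hφ ![1, 0] ![0, 1]
  by_contra! hB
  have hwedge : wedge ![1, 0] ![0, 1] = 1 := rfl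
  rw [hwedge, Int.cast_one, abs_one] at hone
  linarith [mul_nonpos_of_nonpos_of_nonneg hB.le
    (by positivity : 0 ≤ ‖φ ![1, 0]‖ * ‖φ ![0, 1]‖)]

theorem norm_pos_of_wedge_eq_one (hφ : ∀ u v, |(wedge u v : ℝ)| ≤ B * (‖φ u‖ * ‖φ v‖))
    {e f : Fin 2 → ℤ} (hef : wedge e f = 1) : 0 < ‖φ e‖ := by
  refine (norm_nonneg _).lt_of_ne fun h => ?_
  have := hφ e f
  rw [hef, ← h] at this
  norm_num at this

variable [NormedSpace ℝ E]

theorem card_le_of_forall_norm_le_one (hφ : ∀ u v, |(wedge u v : ℝ)| ≤ B * (‖φ u‖ * ‖φ v‖))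
    {e f : Fin 2 → ℤ} (hef : wedge e f = 1) (he : ‖φ e‖ ≤ 1) (hf : ‖φ f‖ ≤ 1)
    {s : Finset (Fin 2 → ℤ)} (hs : ∀ u ∈ s, ‖φ u‖ ≤ 1) : (#s : ℝ) ≤ 15 * B := by
  have hpos := norm_pos_of_wedge_eq_one hφ hef
  have hone : 1 ≤ B * (‖φ e‖ * ‖φ f‖) := by simpa [hef] using hφ e f
  have hB := nonneg_of_abs_wedge_le hφ
  have hone' : 1 ≤ B * ‖φ e‖ := hone.trans <| by
    gcongr
    exact mul_le_of_le_one_right hpos.le hf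
  have hfiber : ∀ k ∈ s.image (wedge e), (#{u ∈ s | wedge e u = k} : ℝ) ≤ 5 * 1 / ‖φ e‖ := by
    refine fun k _ => card_le_of_sub_mem_zmultiples hpos he
      (fun u hu => hs u (Finset.mem_filter.1 hu).1) fun u hu v hv =>
        exists_eq_zsmul_of_wedge_eq_zero hef ?_
    rw [wedge_sub_right, (Finset.mem_filter.1 hu).2, (Finset.mem_filter.1 hv).2, sub_self]
  have himage : (#(s.image (wedge e)) : ℝ) ≤ 2 * (B * ‖φ e‖) + 1 := by
    refine card_le_of_abs_intCast_le (by linarith) fun k hk => ?_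
    obtain ⟨u, hu, rfl⟩ := Finset.mem_image.1 hk
    refine (hφ e u).trans ?_
    gcongr
    exact mul_le_of_le_one_right hpos.le (hs u hu)
  calc (#s : ℝ) ≤ 5 * 1 / ‖φ e‖ * #(s.image (wedge e)) := card_le_mul_card_image_of_fiber_le hfiber
    _ ≤ 5 * 1 / ‖φ e‖ * (3 * (B * ‖φ e‖)) := by gcongr; linarith
    _ = 15 * B := by field_simp; ring

theorem card_unimodular_le_of_norm_row_one_le
    (hφ : ∀ u v, |(wedge u v : ℝ)| ≤ B * (‖φ u‖ * ‖φ v‖))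
    {G : Finset (Matrix (Fin 2) (Fin 2) ℤ)} (hdet : ∀ g ∈ G, g.det = 1)
    (hG : ∀ g ∈ G, ∀ i, ‖φ (g i)‖ ≤ 1) (hle : ∀ g ∈ G, ‖φ (g 1)‖ ≤ ‖φ (g 0)‖) :
    (#G : ℝ) ≤ 75 * B := by
  classical
  rcases G.eq_empty_or_nonempty with rfl | ⟨e, he⟩
  · simpa using nonneg_of_abs_wedge_le hφ
  have hwedge : ∀ g ∈ G, wedge (g 0) (g 1) = 1 := fun g hg => det_eq_wedge g ▸ hdet g hg
  have hfiber : ∀ u ∈ G.image (· 0), (#{g ∈ G | g 0 = u} : ℝ) ≤ 5 := by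
    intro u hu
    obtain ⟨h, hh, rfl⟩ := Finset.mem_image.1 hu
    have hpos := norm_pos_of_wedge_eq_one hφ (hwedge h hh)
    have hinj : Set.InjOn (· 1) {g ∈ G | g 0 = h 0} := fun g hg g' hg' hrow =>
      funext (Fin.forall_fin_two.2 ⟨hg.2.trans hg'.2.symm, hrow⟩)
    rw [← Finset.card_image_of_injOn (by simpa using hinj)]
    refine (card_le_of_sub_mem_zmultiples hpos le_rfl ?_ ?_).trans_eq
      (mul_div_cancel_right₀ 5 hpos.ne')
    · simp only [Finset.forall_mem_image, Finset.mem_filter]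
      rintro g ⟨hg, hgh⟩
      exact hgh ▸ hle g hg
    · simp only [Finset.forall_mem_image, Finset.mem_filter]
      rintro g ⟨hg, hgh⟩ g' ⟨hg', hgh'⟩
      refine exists_eq_zsmul_of_wedge_eq_zero (hwedge h hh) ?_
      rw [wedge_sub_right, ← hgh, hwedge g hg, hgh, ← hgh', hwedge g' hg', sub_self]
  have himage : (#(G.image (· 0)) : ℝ) ≤ 15 * B :=
    card_le_of_forall_norm_le_one hφ (hwedge e he) (hG e he 0) (hG e he 1)
      (Finset.forall_mem_image.2 fun g hg => hG g hg 0)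
  calc (#G : ℝ) ≤ 5 * #(G.image (· 0)) := card_le_mul_card_image_of_fiber_le hfiber
    _ ≤ 5 * (15 * B) := by gcongr
    _ = 75 * B := by ring

/-- Left multiplication by `!![0, -1; 1, 0]`, which exchanges the two rows up to sign and so
reduces the count of unimodular matrices to those whose first row is the longer one. -/
def quarterTurn (g : Matrix (Fin 2) (Fin 2) ℤ) : Matrix (Fin 2) (Fin 2) ℤ :=
  Matrix.of ![-g 1, g 0]

theorem det_quarterTurn (g : Matrix (Fin 2) (Fin 2) ℤ) : (quarterTurn g).det = g.det := by
  simp only [Matrix.det_fin_two, quarterTurn, Matrix.of_apply, Matrix.cons_val_zero,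
    Matrix.cons_val_one, Pi.neg_apply]
  ring

theorem quarterTurn_injective : Function.Injective quarterTurn := fun _ _ h =>
  funext (Fin.forall_fin_two.2 ⟨congrFun h 1, neg_injective (congrFun h 0)⟩)

theorem card_unimodular_le (hφ : ∀ u v, |(wedge u v : ℝ)| ≤ B * (‖φ u‖ * ‖φ v‖))
    {G : Finset (Matrix (Fin 2) (Fin 2) ℤ)} (hdet : ∀ g ∈ G, g.det = 1)
    (hG : ∀ g ∈ G, ∀ i, ‖φ (g i)‖ ≤ 1) : (#G : ℝ) ≤ 150 * B := by
  classical
  set H := {g ∈ G | ‖φ (g 1)‖ ≤ ‖φ (g 0)‖}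
  set K := {g ∈ G | ¬‖φ (g 1)‖ ≤ ‖φ (g 0)‖}
  have hH : (#H : ℝ) ≤ 75 * B :=
    card_unimodular_le_of_norm_row_one_le hφ (fun g hg => hdet g (Finset.mem_filter.1 hg).1)
      (fun g hg => hG g (Finset.mem_filter.1 hg).1) fun g hg => (Finset.mem_filter.1 hg).2
  have hK : (#K : ℝ) ≤ 75 * B := by
    have hneg : ∀ g, ‖φ (quarterTurn g 0)‖ = ‖φ (g 1)‖ := fun g =>
      (congrArg norm (map_neg φ (g 1))).trans (norm_neg _)
    rw [← Finset.card_image_of_injective K quarterTurn_injective]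
    refine card_unimodular_le_of_norm_row_one_le hφ ?_ ?_ ?_ <;>
      simp only [Finset.forall_mem_image, K, Finset.mem_filter, not_le] <;> rintro g ⟨hg, hlt⟩
    · exact (det_quarterTurn g).trans (hdet g hg)
    · exact Fin.forall_fin_two.2 ⟨hneg g ▸ hG g hg 1, hG g hg 0⟩
    · exact (hneg g).symm ▸ hlt.le
  rw [← Finset.card_filter_add_card_filter_not (s := G) fun g => ‖φ (g 1)‖ ≤ ‖φ (g 0)‖]
  push_cast
  linarith

end Counting

theorem act_apply (g : Matrix (Fin 2) (Fin 2) ℤ) (x : Fin 2 → ℝ) (i : Fin 2) :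
    act g x i = g i 0 * x 0 + g i 1 * x 1 := by
  simp [act, Matrix.mulVec, dotProduct, Fin.sum_univ_two]

theorem act_mul (g h : Matrix (Fin 2) (Fin 2) ℤ) (x : Fin 2 → ℝ) :
    act (g * h) x = act g (act h x) := by
  rw [act, act, act, Matrix.map_mul_intCast, Matrix.mulVec_mulVec]

theorem mnorm_le_iff {g : Matrix (Fin 2) (Fin 2) ℤ} {r : ℝ} :
    mnorm g ≤ r ↔ ∀ i j, |(g i j : ℝ)| ≤ r := by
  simp [mnorm, Fin.forall_fin_two]

theorem vnorm_le_iff {v : Fin 2 → ℝ} {r : ℝ} : vnorm v ≤ r ↔ ∀ i, |v i| ≤ r := by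
  simp [vnorm, Fin.forall_fin_two]

theorem abs_le_mnorm (g : Matrix (Fin 2) (Fin 2) ℤ) (i j : Fin 2) : |(g i j : ℝ)| ≤ mnorm g :=
  mnorm_le_iff.1 le_rfl i j

theorem abs_le_vnorm (v : Fin 2 → ℝ) (i : Fin 2) : |v i| ≤ vnorm v :=
  vnorm_le_iff.1 le_rfl i

theorem vnorm_nonneg (v : Fin 2 → ℝ) : 0 ≤ vnorm v :=
  (abs_nonneg _).trans (abs_le_vnorm v 0)

theorem one_le_mnorm {g : Matrix (Fin 2) (Fin 2) ℤ} (hg : g.det = 1) : 1 ≤ mnorm g := by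
  by_contra! h
  have hzero : g = 0 := Matrix.ext fun i j =>
    Int.abs_lt_one_iff.1 (by exact_mod_cast (abs_le_mnorm g i j).trans_lt h)
  simp [hzero] at hg

theorem finite_setOf_mnorm_le (r : ℝ) : {g : Matrix (Fin 2) (Fin 2) ℤ | mnorm g ≤ r}.Finite := by
  have hbox : {g : Fin 2 → Fin 2 → ℤ | ∀ i, g i ∈ {v : Fin 2 → ℤ | ∀ j, v j ∈
      Set.Icc (-⌊r⌋) ⌊r⌋}}.Finite :=
    Set.Finite.pi' fun _ => Set.Finite.pi' fun _ => Set.finite_Icc _ _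
  refine hbox.subset fun g hg i j => ?_
  rw [Set.mem_Icc, ← abs_le, Int.le_floor, Int.cast_abs]
  exact mnorm_le_iff.1 hg i j

theorem mem_muSet_of_le {x Y : Fin 2 → ℝ} {μ ν : ℝ} (hν : ν ∈ muSet x Y) (hμν : μ ≤ ν) :
    μ ∈ muSet x Y := by
  refine Set.Infinite.mono ?_ hν
  rintro γ ⟨hdet, hle⟩
  exact ⟨hdet, hle.trans <|
    Real.rpow_le_rpow_of_exponent_le (one_le_mnorm hdet) (neg_le_neg hμν)⟩

/-- The homomorphism `ℤ² → ℝ³` whose sup norm is the gauge of the box `|u| ≤ S`, `|u ⬝ x| ≤ δ`. -/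
noncomputable def boxHom (x : Fin 2 → ℝ) (S δ : ℝ) : (Fin 2 → ℤ) →+ ℝ × ℝ × ℝ :=
  AddMonoidHom.mk' (fun u => (u 0 / S, u 1 / S, (u 0 * x 0 + u 1 * x 1) / δ)) fun u v => by
    ext <;> simp <;> ring

theorem norm_boxHom_le_iff {x : Fin 2 → ℝ} {S δ r : ℝ} (hS : 0 < S) (hδ : 0 < δ)
    {u : Fin 2 → ℤ} : ‖boxHom x S δ u‖ ≤ r ↔
      (∀ j, |(u j : ℝ)| ≤ r * S) ∧ |u 0 * x 0 + u 1 * x 1| ≤ r * δ := by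
  simp [boxHom, Prod.norm_def, Fin.forall_fin_two, abs_of_pos hS, abs_of_pos hδ,
    div_le_iff₀ hS, div_le_iff₀ hδ, and_assoc]

theorem vnorm_mul_abs_wedge_le (x : Fin 2 → ℝ) {S δ : ℝ} (hS : 0 < S) (hδ : 0 < δ)
    (u v : Fin 2 → ℤ) : vnorm x * |(wedge u v : ℝ)| ≤
      2 * (S * δ) * (‖boxHom x S δ u‖ * ‖boxHom x S δ v‖) := by
  obtain ⟨hu, hux⟩ := (norm_boxHom_le_iff hS hδ).1 (le_refl ‖boxHom x S δ u‖)
  obtain ⟨hv, hvx⟩ := (norm_boxHom_le_iff hS hδ).1 (le_refl ‖boxHom x S δ v‖)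
  set ux := u 0 * x 0 + u 1 * x 1
  set vx := v 0 * x 0 + v 1 * x 1
  have hcross : ∀ j, |u j * vx - v j * ux| ≤
      2 * (S * δ) * (‖boxHom x S δ u‖ * ‖boxHom x S δ v‖) := fun j =>
    calc |u j * vx - v j * ux| ≤ |(u j : ℝ)| * |vx| + |(v j : ℝ)| * |ux| := by
          simpa only [abs_mul] using abs_sub (u j * vx) (v j * ux)
      _ ≤ ‖boxHom x S δ u‖ * S * (‖boxHom x S δ v‖ * δ) +
          ‖boxHom x S δ v‖ * S * (‖boxHom x S δ u‖ * δ) := by gcongr <;> solve_by_elim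
      _ = 2 * (S * δ) * (‖boxHom x S δ u‖ * ‖boxHom x S δ v‖) := by ring
  have h0 : x 1 * wedge u v = u 0 * vx - v 0 * ux := by
    simp only [wedge, ux, vx]; push_cast; ring
  have h1 : x 0 * wedge u v = -(u 1 * vx - v 1 * ux) := by
    simp only [wedge, ux, vx]; push_cast; ring
  rw [vnorm, max_mul_of_nonneg _ _ (abs_nonneg _), ← abs_mul, ← abs_mul, h0, h1, abs_neg]
  exact max_le (hcross 1) (hcross 0)

theorem vnorm_mul_card_unimodular_le {x : Fin 2 → ℝ} {S δ : ℝ} (hS : 0 < S) (hδ : 0 < δ)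
    {G : Finset (Matrix (Fin 2) (Fin 2) ℤ)} (hdet : ∀ g ∈ G, g.det = 1)
    (hnorm : ∀ g ∈ G, mnorm g ≤ S) (hact : ∀ g ∈ G, vnorm (act g x) ≤ δ) :
    vnorm x * #G ≤ 300 * (S * δ) := by
  rcases (vnorm_nonneg x).eq_or_lt with hx | hx
  · rw [← hx, zero_mul]
    positivity
  have hwedge : ∀ u v, |(wedge u v : ℝ)| ≤
      2 * (S * δ) / vnorm x * (‖boxHom x S δ u‖ * ‖boxHom x S δ v‖) := fun u v => by
    rw [div_mul_eq_mul_div, le_div_iff₀' hx]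
    exact vnorm_mul_abs_wedge_le x hS hδ u v
  have hrow : ∀ g ∈ G, ∀ i, ‖boxHom x S δ (g i)‖ ≤ 1 := fun g hg i => by
    rw [norm_boxHom_le_iff hS hδ, one_mul, one_mul, ← act_apply]
    exact ⟨mnorm_le_iff.1 (hnorm g hg) i, vnorm_le_iff.1 (hact g hg) i⟩
  have hcard := card_unimodular_le hwedge hdet hrow
  rw [mul_div_assoc', le_div_iff₀' hx] at hcard
  linarith

section UnimodularApproximation

variable {y w : ℝ}

theorem eventually_lt_abs_of_notMem_omegaSet (hy : Irrational y) (hw : 0 < w)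
    (hωy : w ∉ omegaSet y) :
    ∀ᶠ Q : ℝ in atTop, ∀ u v : ℤ, u ≠ 0 → |u * y + v| ≤ 1 / Q ^ w → Q < |(u : ℝ)| := by
  have hfar : ∀ᶠ Q : ℝ in atTop, ∀ p ∈ {p : ℤ × ℤ | |p.1 * y + p.2| ≤ |(p.1 : ℝ)| ^ (-w)},
      p.1 ≠ 0 → 1 / Q ^ w < |p.1 * y + p.2| := by
    rw [eventually_all_finite (Set.not_infinite.1 hωy)]
    intro p _
    by_cases hp : p.1 = 0
    · simp [hp]
    have hpos : 0 < |p.1 * y + p.2| :=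
      abs_pos.2 ((hy.intCast_mul hp).add_intCast p.2).ne_zero
    have hlim : Tendsto (fun Q : ℝ => 1 / Q ^ w) atTop (𝓝 0) := by
      simpa using (tendsto_rpow_atTop hw).const_div_atTop 1
    filter_upwards [hlim.eventually_lt_const hpos] with Q hQ _ using hQ
  filter_upwards [hfar, eventually_gt_atTop 0] with Q hQ hQ0 u v hu huv
  have hgood : |(u : ℝ)| ^ (-w) < |u * y + v| := by
    by_contra! h
    exact (hQ (u, v) h hu).not_ge huv
  have hu' : 0 < |(u : ℝ)| := abs_pos.2 (Int.cast_ne_zero.2 hu)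
  rw [one_div, ← Real.rpow_neg hQ0.le] at huv
  exact (Real.rpow_lt_rpow_iff_of_neg hu' hQ0 (neg_lt_zero.2 hw)).1 (hgood.trans_le huv)

theorem exists_isCoprime_abs_mul_add_le (y : ℝ) {R : ℝ} (hR : 1 ≤ R) :
    ∃ a b : ℤ, 0 < a ∧ IsCoprime a b ∧ (a : ℝ) ≤ R ∧ |a * y + b| ≤ 1 / R := by
  obtain ⟨r, hr, hrR⟩ := Real.exists_rat_abs_sub_le_and_den_le y (Nat.floor_pos.2 hR)
  have hden : (0 : ℝ) < r.den := mod_cast r.den_pos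
  refine ⟨r.den, -r.num, mod_cast r.den_pos, ?_, ?_, ?_⟩
  · exact r.isCoprime_num_den.symm.neg_right
  · exact (Nat.cast_le.2 hrR).trans (Nat.floor_le (by linarith))
  · have hnum : (r : ℝ) * r.den = r.num := mod_cast Rat.mul_den_eq_num r
    have hsub : ((r.den : ℤ) : ℝ) * y + ((-r.num : ℤ) : ℝ) = r.den * (y - r) := by
      push_cast
      linear_combination hnum
    calc |((r.den : ℤ) : ℝ) * y + ((-r.num : ℤ) : ℝ)| = r.den * |y - r| := by
          rw [hsub, abs_mul, abs_of_pos hden]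
      _ ≤ r.den * (1 / ((⌊R⌋₊ + 1) * r.den)) := by gcongr
      _ = 1 / (⌊R⌋₊ + 1) := by field_simp
      _ ≤ 1 / R := by gcongr; exact (Nat.lt_floor_add_one R).le

theorem exists_completion_of_isCoprime {a b : ℤ} (ha : 0 < a) (hab : IsCoprime a b) :
    ∃ c d : ℤ, a * d - b * c = 1 ∧ 0 ≤ c ∧ c ≤ a := by
  obtain ⟨m, n, hmn⟩ := hab
  refine ⟨-n % a, m - b * (-n / a), ?_, Int.emod_nonneg _ ha.ne', (Int.emod_lt_of_pos _ ha).le⟩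
  linear_combination hmn - b * Int.emod_add_mul_ediv (-n) a

theorem eventually_exists_unimodular_approx (hy : Irrational y) (hw : 0 < w)
    (hωy : w ∉ omegaSet y) :
    ∀ᶠ Q : ℝ in atTop, ∃ N : Matrix (Fin 2) (Fin 2) ℤ, N.det = 1 ∧
      (∀ i, |(N i 0 : ℝ)| ≤ Q ^ w) ∧ vnorm (act N ![y, 1]) ≤ 2 / Q := by
  filter_upwards [eventually_lt_abs_of_notMem_omegaSet hy hw hωy, eventually_ge_atTop 1]
    with Q hQ hQ1
  have : 0 < Q := by linarith
  obtain ⟨a, b, ha, hab, haQ, happrox⟩ :=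
    exists_isCoprime_abs_mul_add_le y (Real.one_le_rpow hQ1 hw.le)
  obtain ⟨c, d, hdet, hc, hca⟩ := exists_completion_of_isCoprime ha hab
  have ha' : (0 : ℝ) < a := Int.cast_pos.2 ha
  have hc' : (0 : ℝ) ≤ c := Int.cast_nonneg hc
  have hca' : (c : ℝ) ≤ a := Int.cast_le.2 hca
  have hQa : Q ≤ a := by simpa only [abs_of_pos ha'] using (hQ a b ha.ne' happrox).le
  have hinv : 1 / Q ^ w ≤ 1 / a := by gcongr
  have hcd : |c * y + d| ≤ 2 / a := by
    have hsplit : a * (c * y + d) = c * (a * y + b) + 1 := by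
      have : (a * d - b * c : ℝ) = 1 := mod_cast hdet
      linear_combination this
    rw [le_div_iff₀' ha']
    calc a * |c * y + d| = |c * (a * y + b) + 1| := by
          rw [← hsplit, abs_mul, abs_of_pos ha']
      _ ≤ c * |a * y + b| + 1 := by
          simpa only [abs_mul, abs_of_nonneg hc', abs_one] using abs_add_le (c * (a * y + b)) 1
      _ ≤ a * (1 / Q ^ w) + 1 := by gcongr
      _ ≤ a * (1 / a) + 1 := by gcongr
      _ = 2 := by field_simp; norm_num
  refine ⟨!![a, b; c, d], by rwa [Matrix.det_fin_two_of], ?_, ?_⟩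
  · simpa [Fin.forall_fin_two, abs_of_pos ha', abs_of_nonneg hc'] using ⟨haQ, hca'.trans haQ⟩
  · have hab' : |a * y + b| ≤ 2 / Q := calc
      |a * y + b| ≤ 1 / a := happrox.trans hinv
      _ ≤ 2 / Q := by gcongr; norm_num
    have hcd' : |c * y + d| ≤ 2 / Q := hcd.trans (by gcongr)
    simpa [vnorm_le_iff, Fin.forall_fin_two, act_apply] using ⟨hab', hcd'⟩

end UnimodularApproximation

/-- `γ ∈ SL(2, ℤ)` has height at most `T` and moves `x` to within `κ` of the point `t (y, 1)` of
the line `ℝ (y, 1)`, where `t` is restricted to the range `A⁻¹ ≤ |t| ≤ A`, away from `0` and `∞`. -/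
structure IsLineApprox (x : Fin 2 → ℝ) (y A T κ : ℝ) (γ : Matrix (Fin 2) (Fin 2) ℤ) (t : ℝ) :
    Prop where
  det_eq_one : γ.det = 1
  mnorm_le : mnorm γ ≤ T
  inv_le_abs : A⁻¹ ≤ |t|
  abs_le : |t| ≤ A
  vnorm_le : vnorm (act γ x - t • ![y, 1]) ≤ κ

theorem abs_mul_add_mul_le (q r a b y : ℝ) :
    |q * a + r * b| ≤ |q| * |a - y * b| + |q * y + r| * |b| := by
  rw [← abs_mul, ← abs_mul, show q * a + r * b = q * (a - y * b) + (q * y + r) * b by ring]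
  exact abs_add_le _ _

namespace IsLineApprox

variable {x : Fin 2 → ℝ} {y A T κ t R D : ℝ} {γ N : Matrix (Fin 2) (Fin 2) ℤ}

theorem abs_act_zero_sub_le (h : IsLineApprox x y A T κ γ t) : |act γ x 0 - t * y| ≤ κ := by
  simpa using vnorm_le_iff.1 h.vnorm_le 0

theorem abs_act_one_sub_le (h : IsLineApprox x y A T κ γ t) : |act γ x 1 - t| ≤ κ := by
  simpa using vnorm_le_iff.1 h.vnorm_le 1

theorem abs_act_zero_sub_mul_le (h : IsLineApprox x y A T κ γ t) :
    |act γ x 0 - y * act γ x 1| ≤ (1 + |y|) * κ :=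
  calc |act γ x 0 - y * act γ x 1| = |(act γ x 0 - t * y) - y * (act γ x 1 - t)| := by ring_nf
    _ ≤ |act γ x 0 - t * y| + |y| * |act γ x 1 - t| := by
      simpa only [abs_mul] using abs_sub (act γ x 0 - t * y) (y * (act γ x 1 - t))
    _ ≤ κ + |y| * κ := by gcongr; exacts [h.abs_act_zero_sub_le, h.abs_act_one_sub_le]
    _ = (1 + |y|) * κ := by ring

theorem abs_act_one_le (h : IsLineApprox x y A T κ γ t) : |act γ x 1| ≤ A + κ := by
  linarith [abs_sub_abs_le_abs_sub (act γ x 1) t, h.abs_act_one_sub_le, h.abs_le]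

theorem le_abs_act_one (h : IsLineApprox x y A T κ γ t) (hκ : κ ≤ A⁻¹ / 2) :
    A⁻¹ / 2 ≤ |act γ x 1| := by
  linarith [abs_sub_abs_le_abs_sub t (act γ x 1), abs_sub_comm t (act γ x 1),
    h.abs_act_one_sub_le, h.inv_le_abs]

theorem abs_sub_mul_mul_abs_act_one_le (h : IsLineApprox x y A T κ γ t) (hTκ : 1 ≤ T * κ)
    (j : Fin 2) :
    |γ 0 j - y * γ 1 j| * |act γ x 1| ≤ (vnorm x + 1 + |y|) * (T * κ) := by
  set η := act γ x 0 - y * act γ x 1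
  have hdet : (γ 0 0 * γ 1 1 - γ 0 1 * γ 1 0 : ℝ) = 1 := by
    exact_mod_cast (Matrix.det_fin_two γ).symm.trans h.det_eq_one
  have hη : |γ 1 j * η| ≤ (1 + |y|) * (T * κ) := by
    have hT : 0 ≤ T := zero_le_one.trans ((one_le_mnorm h.det_eq_one).trans h.mnorm_le)
    rw [abs_mul]
    calc |(γ 1 j : ℝ)| * |η| ≤ T * ((1 + |y|) * κ) := by
          gcongr
          exacts [(abs_le_mnorm γ 1 j).trans h.mnorm_le, h.abs_act_zero_sub_mul_le]
      _ = (1 + |y|) * (T * κ) := by ring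
  -- Eliminating with `det γ = 1`, the difference below is one of the entries `± x i`.
  have hx : |(γ 0 j - y * γ 1 j) * act γ x 1 - γ 1 j * η| ≤ vnorm x := by
    fin_cases j
    · convert abs_le_vnorm x 1 using 2
      simp only [η, act_apply, Fin.zero_eta]
      linear_combination x 1 * hdet
    · rw [← abs_neg]
      convert abs_le_vnorm x 0 using 2
      simp only [η, act_apply, Fin.mk_one]
      linear_combination x 0 * hdet
  have hvx : vnorm x ≤ vnorm x * (T * κ) := le_mul_of_one_le_right (vnorm_nonneg x) hTκ
  rw [← abs_mul]
  linarith [abs_sub_abs_le_abs_sub ((γ 0 j - y * γ 1 j) * act γ x 1) (γ 1 j * η)]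

theorem abs_sub_mul_le (h : IsLineApprox x y A T κ γ t) (hA : 1 ≤ A) (hκ : κ ≤ A⁻¹ / 2)
    (hTκ : 1 ≤ T * κ) (j : Fin 2) :
    |γ 0 j - y * γ 1 j| ≤ 2 * A * (vnorm x + 1 + |y|) * (T * κ) := by
  have : 0 < A := by linarith
  have hlow : |γ 0 j - y * γ 1 j| * (A⁻¹ / 2) ≤ (vnorm x + 1 + |y|) * (T * κ) :=
    (by gcongr; exact h.le_abs_act_one hκ : _ ≤ |γ 0 j - y * γ 1 j| * |act γ x 1|).trans
      (h.abs_sub_mul_mul_abs_act_one_le hTκ j)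
  calc |γ 0 j - y * γ 1 j| = 2 * A * (|γ 0 j - y * γ 1 j| * (A⁻¹ / 2)) := by field_simp
    _ ≤ 2 * A * ((vnorm x + 1 + |y|) * (T * κ)) := by gcongr
    _ = 2 * A * (vnorm x + 1 + |y|) * (T * κ) := by ring

theorem mnorm_mul_le (h : IsLineApprox x y A T κ γ t) (hA : 1 ≤ A) (hκ : κ ≤ A⁻¹ / 2)
    (hTκ : 1 ≤ T * κ) (hNR : ∀ i, |(N i 0 : ℝ)| ≤ R) (hND : vnorm (act N ![y, 1]) ≤ D)
    (hRκ : R * κ ≤ D) :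
    mnorm (N * γ) ≤ (2 * A * (vnorm x + 1 + |y|) + 1) * (T * D) := by
  have hT : 0 ≤ T := zero_le_one.trans ((one_le_mnorm h.det_eq_one).trans h.mnorm_le)
  have hx := vnorm_nonneg x
  have hD : 0 ≤ D := (vnorm_nonneg _).trans hND
  have hR : 0 ≤ R := (abs_nonneg _).trans (hNR 0)
  refine mnorm_le_iff.2 fun i j => ?_
  have hNy : |N i 0 * y + N i 1| ≤ D := by simpa [act_apply] using vnorm_le_iff.1 hND i
  rw [Matrix.mul_apply, Fin.sum_univ_two]
  push_cast
  calc |(N i 0 : ℝ) * γ 0 j + N i 1 * γ 1 j|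
      ≤ |(N i 0 : ℝ)| * |γ 0 j - y * γ 1 j| + |N i 0 * y + N i 1| * |(γ 1 j : ℝ)| :=
        abs_mul_add_mul_le _ _ _ _ _
    _ ≤ R * (2 * A * (vnorm x + 1 + |y|) * (T * κ)) + D * T := by
        gcongr
        exacts [hNR i, h.abs_sub_mul_le hA hκ hTκ j, (abs_le_mnorm γ 1 j).trans h.mnorm_le]
    _ = 2 * A * (vnorm x + 1 + |y|) * (T * (R * κ)) + T * D := by ring
    _ ≤ 2 * A * (vnorm x + 1 + |y|) * (T * D) + T * D := by gcongr
    _ = (2 * A * (vnorm x + 1 + |y|) + 1) * (T * D) := by ring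

theorem vnorm_act_mul_le (h : IsLineApprox x y A T κ γ t) (hκ : κ ≤ A)
    (hNR : ∀ i, |(N i 0 : ℝ)| ≤ R) (hND : vnorm (act N ![y, 1]) ≤ D) (hRκ : R * κ ≤ D) :
    vnorm (act (N * γ) x) ≤ (1 + |y| + 2 * A) * D := by
  have hD : 0 ≤ D := (vnorm_nonneg _).trans hND
  have hR : 0 ≤ R := (abs_nonneg _).trans (hNR 0)
  refine vnorm_le_iff.2 fun i => ?_
  have hNy : |N i 0 * y + N i 1| ≤ D := by simpa [act_apply] using vnorm_le_iff.1 hND i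
  rw [act_mul, act_apply]
  calc |N i 0 * act γ x 0 + N i 1 * act γ x 1|
      ≤ |(N i 0 : ℝ)| * |act γ x 0 - y * act γ x 1| + |N i 0 * y + N i 1| * |act γ x 1| :=
        abs_mul_add_mul_le _ _ _ _ _
    _ ≤ R * ((1 + |y|) * κ) + D * (A + κ) := by
        gcongr
        exacts [hNR i, h.abs_act_zero_sub_mul_le, h.abs_act_one_le]
    _ = (1 + |y|) * (R * κ) + (A + κ) * D := by ring
    _ ≤ (1 + |y|) * D + (A + A) * D := by gcongr
    _ = (1 + |y| + 2 * A) * D := by ring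

theorem vnorm_mul_card_le {G : Finset (Matrix (Fin 2) (Fin 2) ℤ)}
    (hG : ∀ γ ∈ G, ∃ t, IsLineApprox x y A T κ γ t) (hA : 1 ≤ A) (hκ : κ ≤ A⁻¹ / 2)
    (hT : 0 < T) (hTκ : 1 ≤ T * κ) (hN : N.det = 1) (hNR : ∀ i, |(N i 0 : ℝ)| ≤ R)
    (hND : vnorm (act N ![y, 1]) ≤ D) (hD : 0 < D) (hRκ : R * κ ≤ D) :
    vnorm x * #G ≤
      300 * ((2 * A * (vnorm x + 1 + |y|) + 1) * (1 + |y| + 2 * A)) * (T * D ^ 2) := by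
  classical
  have hx := vnorm_nonneg x
  have hκA : κ ≤ A := by linarith [inv_le_one_of_one_le₀ hA]
  have hinj : Function.Injective (N * ·) := fun g g' h => by
    have := congrArg (N.adjugate * ·) h
    simpa [← Matrix.mul_assoc, Matrix.adjugate_mul, hN] using this
  have hcard := vnorm_mul_card_unimodular_le (x := x) (G := G.image (N * ·))
    (S := (2 * A * (vnorm x + 1 + |y|) + 1) * (T * D)) (δ := (1 + |y| + 2 * A) * D)
    (by positivity) (by positivity)
    (Finset.forall_mem_image.2 fun γ hγ => by
      obtain ⟨t, h⟩ := hG γ hγ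
      rw [Matrix.det_mul, hN, h.det_eq_one, one_mul])
    (Finset.forall_mem_image.2 fun γ hγ => by
      obtain ⟨t, h⟩ := hG γ hγ
      exact h.mnorm_mul_le hA hκ hTκ hNR hND hRκ)
    (Finset.forall_mem_image.2 fun γ hγ => by
      obtain ⟨t, h⟩ := hG γ hγ
      exact h.vnorm_act_mul_le hκA hNR hND hRκ)
  rw [Finset.card_image_of_injective G hinj] at hcard
  linarith

theorem vnorm_pos (h : IsLineApprox x y A T κ γ t) (hA : 0 < A) (hκ : κ ≤ A⁻¹ / 2) :
    0 < vnorm x := by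
  refine (vnorm_nonneg x).lt_of_ne fun hx => ?_
  have hzero : ∀ i, x i = 0 := fun i => abs_nonpos_iff.1 (hx ▸ abs_le_vnorm x i)
  have hact := h.le_abs_act_one hκ
  rw [act_apply, hzero 0, hzero 1, mul_zero, mul_zero, add_zero, abs_zero] at hact
  linarith [inv_pos.2 hA]

end IsLineApprox

theorem eventually_card_le (x : Fin 2 → ℝ) {y w v A : ℝ} (hy : Irrational y) (hw : 0 < w)
    (hωy : w ∉ omegaSet y) (hwv : w + 1 ≤ v) (hA : 1 ≤ A) :
    ∃ C : ℝ, ∀ᶠ Q : ℝ in atTop, ∀ G : Finset (Matrix (Fin 2) (Fin 2) ℤ),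
      (∀ γ ∈ G, ∃ t, IsLineApprox x y A ((2 * Q) ^ v) (Q ^ (-(w + 1))) γ t) →
        #G ≤ C * Q ^ (v - 2) := by
  set K := 300 * ((2 * A * (vnorm x + 1 + |y|) + 1) * (1 + |y| + 2 * A))
  have hx := vnorm_nonneg x
  have hA0 : 0 < A := by linarith
  refine ⟨K * (2 ^ v * 4) / vnorm x, ?_⟩
  have hκ : ∀ᶠ Q : ℝ in atTop, Q ^ (-(w + 1)) ≤ A⁻¹ / 2 :=
    (tendsto_rpow_neg_atTop (by linarith)).eventually_le_const (by positivity)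
  filter_upwards [eventually_exists_unimodular_approx hy hw hωy, hκ, eventually_ge_atTop 1]
    with Q ⟨N, hN, hNR, hND⟩ hκ hQ1 G hG
  have hQ0 : 0 < Q := by linarith
  rcases G.eq_empty_or_nonempty with rfl | ⟨γ, hγ⟩
  · simp only [Finset.card_empty, Nat.cast_zero]
    positivity
  obtain ⟨t, ht⟩ := hG γ hγ
  have hpos := ht.vnorm_pos hA0 hκ
  have hTκ : 1 ≤ (2 * Q) ^ v * Q ^ (-(w + 1)) :=
    calc (1 : ℝ) ≤ 2 ^ v * Q ^ (v + -(w + 1)) :=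
          one_le_mul_of_one_le_of_one_le (Real.one_le_rpow one_le_two (by linarith))
            (Real.one_le_rpow hQ1 (by linarith))
      _ = (2 * Q) ^ v * Q ^ (-(w + 1)) := by
          rw [Real.mul_rpow zero_le_two hQ0.le, Real.rpow_add hQ0, mul_assoc]
  have hRκ : Q ^ w * Q ^ (-(w + 1)) ≤ 2 / Q := by
    rw [← Real.rpow_add hQ0, show w + -(w + 1) = -1 by ring, Real.rpow_neg_one, ← one_div]
    gcongr
    exact one_le_two
  have hcard := IsLineApprox.vnorm_mul_card_le hG hA hκ (by positivity) hTκ hN hNR hND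
    (by positivity) hRκ
  rw [div_mul_eq_mul_div, le_div_iff₀' hpos]
  refine hcard.trans_eq ?_
  rw [Real.mul_rpow zero_le_two hQ0.le, Real.rpow_sub hQ0, Real.rpow_two]
  ring

theorem volume_setOf_exists_isLineApprox_le {x : Fin 2 → ℝ} {y A T κ M : ℝ} (hκ : 0 ≤ κ)
    (hM : ∀ G : Finset (Matrix (Fin 2) (Fin 2) ℤ),
      (∀ γ ∈ G, ∃ t, IsLineApprox x y A T κ γ t) → #G ≤ M) :
    volume {t | ∃ γ, IsLineApprox x y A T κ γ t} ≤ ENNReal.ofReal (M * (2 * κ)) := by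
  have hfin : {γ | ∃ t, IsLineApprox x y A T κ γ t}.Finite :=
    (finite_setOf_mnorm_le T).subset fun γ ⟨t, h⟩ => h.mnorm_le
  have hsub : {t | ∃ γ, IsLineApprox x y A T κ γ t} ⊆
      ⋃ γ ∈ hfin.toFinset, Metric.closedBall (act γ x 1) κ := by
    rintro t ⟨γ, h⟩
    refine Set.mem_biUnion (hfin.mem_toFinset.2 ⟨t, h⟩) ?_
    rw [Metric.mem_closedBall, Real.dist_eq, abs_sub_comm]
    exact h.abs_act_one_sub_le
  calc volume {t | ∃ γ, IsLineApprox x y A T κ γ t}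
      ≤ ∑ γ ∈ hfin.toFinset, volume (Metric.closedBall (act γ x 1) κ) :=
        (measure_mono hsub).trans (measure_biUnion_finset_le _ _)
    _ = ENNReal.ofReal (#hfin.toFinset * (2 * κ)) := by
        simp only [Real.volume_closedBall, Finset.sum_const, nsmul_eq_mul]
        rw [ENNReal.ofReal_mul (Nat.cast_nonneg _), ENNReal.ofReal_natCast]
    _ ≤ ENNReal.ofReal (M * (2 * κ)) := by
        gcongr
        exact hM _ fun γ hγ => hfin.mem_toFinset.1 hγ

theorem ae_eventually_forall_not_isLineApprox (x : Fin 2 → ℝ) {y w v A : ℝ} (hy : Irrational y)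
    (hw : 0 < w) (hωy : w ∉ omegaSet y) (hwv : w + 1 ≤ v) (hvw : v < w + 3) (hA : 1 ≤ A) :
    ∀ᵐ t, ∀ᶠ j : ℕ in atTop, ∀ γ,
      ¬IsLineApprox x y A ((2 * 2 ^ j) ^ v) ((2 ^ j) ^ (-(w + 1))) γ t := by
  obtain ⟨C, hC⟩ := eventually_card_le x hy hw hωy hwv hA
  obtain ⟨J, hJ⟩ := eventually_atTop.1
    ((tendsto_pow_atTop_atTop_of_one_lt (one_lt_two : (1 : ℝ) < 2)).eventually hC)
  set E : ℕ → Set ℝ := fun j =>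
    {t | ∃ γ, IsLineApprox x y A ((2 * 2 ^ j) ^ v) ((2 ^ j) ^ (-(w + 1))) γ t}
  set r : ℝ := 2 ^ (v - w - 3) with hr
  have hvol : ∀ j, volume (E (j + J)) ≤ ENNReal.ofReal (2 * C * r ^ (j + J)) := by
    intro j
    refine (volume_setOf_exists_isLineApprox_le (by positivity)
      (hJ (j + J) (Nat.le_add_left J j))).trans_eq (congrArg _ ?_)
    have hrpow : r ^ (j + J) = ((2 : ℝ) ^ (j + J)) ^ (v - 2) * (2 ^ (j + J)) ^ (-(w + 1)) := by
      rw [← Real.rpow_add (by positivity), hr, Real.rpow_pow_comm zero_le_two]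
      ring_nf
    rw [hrpow]
    ring
  have hsum : Summable fun j => 2 * C * r ^ (j + J) :=
    ((summable_nat_add_iff J).2 (summable_geometric_of_lt_one (by positivity)
      (Real.rpow_lt_one_of_one_lt_of_neg one_lt_two (by linarith)))).mul_left _
  filter_upwards [ae_eventually_notMem
    (ne_top_of_le_ne_top hsum.tsum_ofReal_ne_top (ENNReal.tsum_le_tsum hvol))] with t ht
  rw [← map_add_atTop_eq_nat J, eventually_map]
  filter_upwards [ht] with j hj γ hγ using hj ⟨γ, hγ⟩

theorem notMem_muSet_of_eventually_not_isLineApprox {x : Fin 2 → ℝ} {y w v A t : ℝ}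
    (hw : 0 ≤ w + 1) (hv : 0 < v) (hAt : A⁻¹ ≤ |t|) (htA : |t| ≤ A)
    (h : ∀ᶠ j : ℕ in atTop, ∀ γ,
      ¬IsLineApprox x y A ((2 * 2 ^ j) ^ v) ((2 ^ j) ^ (-(w + 1))) γ t) :
    (w + 1) / v ∉ muSet x (t • ![y, 1]) := by
  obtain ⟨J, hJ⟩ := eventually_atTop.1 h
  refine Set.not_infinite.2 ((finite_setOf_mnorm_le ((2 ^ J) ^ v)).subset ?_)
  rintro γ ⟨hdet, hle⟩
  have hone := one_le_mnorm hdet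
  have hpos : 0 < mnorm γ := by linarith
  obtain ⟨j, hj, hj'⟩ := exists_nat_pow_near (Real.one_le_rpow hone (inv_nonneg.2 hv.le))
    (one_lt_two : (1 : ℝ) < 2)
  have hlt : mnorm γ < (2 ^ (j + 1)) ^ v := by
    rwa [← Real.rpow_inv_lt_iff_of_pos hpos.le (by positivity) hv]
  by_contra hJγ
  have hJj : J ≤ j := by
    by_contra! hjJ
    refine hJγ (hlt.le.trans ?_)
    gcongr
    exacts [one_le_two, hjJ]
  refine hJ j hJj γ ⟨hdet, by rw [← pow_succ']; exact hlt.le, hAt, htA, hle.trans ?_⟩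
  calc mnorm γ ^ (-((w + 1) / v)) = (mnorm γ ^ v⁻¹) ^ (-(w + 1)) := by
        rw [← Real.rpow_mul hpos.le]
        ring_nf
    _ ≤ (2 ^ j) ^ (-(w + 1)) :=
        Real.rpow_le_rpow_of_nonpos (by positivity) hj (by linarith)

theorem ae_notMem_muSet (x : Fin 2 → ℝ) {y w v : ℝ} (hy : Irrational y) (hw : 0 < w)
    (hωy : w ∉ omegaSet y) (hwv : w + 1 ≤ v) (hvw : v < w + 3) :
    ∀ᵐ t : ℝ, (w + 1) / v ∉ muSet x (t • ![y, 1]) := by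
  have hae := ae_all_iff.2 fun n : ℕ =>
    ae_eventually_forall_not_isLineApprox x hy hw hωy hwv hvw (A := n + 1) (by simp)
  filter_upwards [hae, Measure.ae_ne volume 0] with t ht ht0
  obtain ⟨n, hn⟩ := exists_nat_ge (max |t| |t|⁻¹)
  obtain ⟨hn, hn'⟩ := max_le_iff.1 hn
  refine notMem_muSet_of_eventually_not_isLineApprox (by linarith) (by linarith) ?_
    (by linarith) (ht n)
  exact inv_le_of_inv_le₀ (abs_pos.2 ht0) (by linarith)

theorem stmt15_general (x : Fin 2 → ℝ) {y w : ℝ} (hy : Irrational y) (hw : 0 < w)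
    (hωy : ∀ ε : ℝ, 0 < ε → w + ε ∉ omegaSet y) :
    ∀ᵐ c : ℝ, ∀ μ : ℝ, (w + 1) / (w + 3) < μ → μ ∉ muSet x (c • ![y, 1]) := by
  have hae : ∀ᵐ c : ℝ, ∀ m : ℕ, (w + 1 / (m + 1) + 1) / (w + 3) ∉ muSet x (c • ![y, 1]) := by
    refine ae_all_iff.2 fun m => ?_
    have hm : (0 : ℝ) < 1 / (m + 1) := Nat.one_div_pos_of_nat
    have hm' : (1 : ℝ) / (m + 1) ≤ 1 := (div_le_one₀ (by positivity)).2 (by simp)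
    exact ae_notMem_muSet x hy (by linarith) (hωy _ hm) (by linarith) (by linarith)
  filter_upwards [hae] with c hc μ hμ hmem
  rw [div_lt_iff₀ (by linarith)] at hμ
  obtain ⟨m, hm⟩ := exists_nat_one_div_lt (sub_pos.2 hμ)
  refine hc m (mem_muSet_of_le hmem ?_)
  rw [div_le_iff₀ (by linarith)]
  linarith

/-- Theorem 3: if `x` has irrational slope and `y` is irrational with
irrationality measure `ω(y) = 1`, then for almost every point `Y` on the line `ℝ (y, 1)ᵀ`
one has `μ(x, Y) ≤ 1/2`, i.e. for every `μ > 1/2` only finitely many `γ ∈ SL(2, ℤ)`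
satisfy `|γ x - Y| ≤ |γ|^{-μ}`. -/
theorem stmt15 (x : Fin 2 → ℝ) (hx2 : x 1 ≠ 0) (hξ : Irrational (x 0 / x 1))
    (y : ℝ) (hy : Irrational y)
    (hωy : ∀ ε : ℝ, 0 < ε →
      {p : ℤ × ℤ | |(p.1 : ℝ) * y + (p.2 : ℝ)| ≤ |(p.1 : ℝ)| ^ (-(1 + ε))}.Finite) :
    ∀ᵐ c ∂(volume : Measure ℝ), ∀ μ : ℝ, 1 / 2 < μ →
      {γ : Matrix (Fin 2) (Fin 2) ℤ |
        γ.det = 1 ∧ vnorm (act γ x - c • ![y, 1]) ≤ mnorm γ ^ (-μ)}.Finite := by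
  have h := stmt15_general x hy one_pos fun ε hε => Set.not_infinite.2 (hωy ε hε)
  norm_num [muSet] at h ⊢
  exact h
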